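/- Let α > 0 and let (L_n) be a sequence of integers with L_n ≥ 2 for all n (in particular this holds eventually when L_n → ∞ as n → ∞, as assumed in Proposition A.2). For each n, let G_n and H_n be independent random variables with G_n ~ Gamma(α, 1) and H_n ~ Gamma(L_n, L_n/n), and set V_n = G_n/(G_n + H_n). Then √n · V_n → 0 in probability as n → ∞; equivalently, for every ε > 0, the product measure Gamma(α, 1) ⊗ Gamma(L_n, L_n/n) of the set {(g, h) ∈ (0,∞)² : √n · g/(g + h) > ε} tends to 0 as n → ∞. -/

import Mathlib

open MeasureTheory ProbabilityTheory Filter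

/-!
Since `g / (g + h) ≤ g / h` for `g, h > 0`, Markov's inequality and independence bound the
probability that `√n V_n` exceeds `ε` by `√n ε⁻¹ E[G_n] E[H_n⁻¹]`. Multiplying a Gamma density by
`x ^ s` shifts its shape by `s` up to a constant, so that all power moments come from the total mass
of a Gamma density; here `E[G_n] = α` and `E[H_n⁻¹] = (L_n / n) / (L_n - 1) ≤ 2 / n`, and the bound
is `O(1 / √n)`.
-/

section GammaMoments

variable {a r s x : ℝ}

lemma measurable_gammaPDF (a r : ℝ) : Measurable (gammaPDF a r) :=
  (measurable_gammaPDFReal a r).ennreal_ofReal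

lemma ae_pos_gammaMeasure (a r : ℝ) : ∀ᵐ x ∂gammaMeasure a r, 0 < x := by
  rw [gammaMeasure, ae_withDensity_iff (measurable_gammaPDF a r)]
  filter_upwards [Measure.ae_ne volume (0 : ℝ)] with x hx hpdf
  by_contra! hle
  exact hpdf (gammaPDF_of_neg (hle.lt_of_ne hx))

lemma gammaPDF_mul_ofReal_rpow (ha : 0 < a) (has : 0 < a + s) (hr : 0 < r) (hx : 0 < x) :
    gammaPDF a r x * ENNReal.ofReal (x ^ s) =
      ENNReal.ofReal (Real.Gamma (a + s) / (Real.Gamma a * r ^ s)) * gammaPDF (a + s) r x := by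
  have := Real.Gamma_pos_of_pos ha
  have := Real.Gamma_pos_of_pos has
  rw [gammaPDF_of_nonneg hx.le, gammaPDF_of_nonneg hx.le, ← ENNReal.ofReal_mul (by positivity),
    ← ENNReal.ofReal_mul (by positivity), Real.rpow_add hr, add_sub_right_comm, Real.rpow_add hx]
  congr 1
  field_simp

lemma lintegral_rpow_gammaMeasure (ha : 0 < a) (has : 0 < a + s) (hr : 0 < r) :
    ∫⁻ x, ENNReal.ofReal (x ^ s) ∂gammaMeasure a r =
      ENNReal.ofReal (Real.Gamma (a + s) / (Real.Gamma a * r ^ s)) := by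
  set C := ENNReal.ofReal (Real.Gamma (a + s) / (Real.Gamma a * r ^ s))
  have hshift : ∀ᵐ x : ℝ,
      (gammaPDF a r * fun x ↦ ENNReal.ofReal (x ^ s)) x = C * gammaPDF (a + s) r x := by
    filter_upwards [Measure.ae_ne volume (0 : ℝ)] with x hx
    rcases hx.lt_or_gt with hneg | hpos
    · simp [gammaPDF_of_neg hneg]
    · exact gammaPDF_mul_ofReal_rpow ha has hr hpos
  rw [gammaMeasure, lintegral_withDensity_eq_lintegral_mul _ (measurable_gammaPDF a r)
    (by fun_prop), lintegral_congr_ae hshift, lintegral_const_mul _ (measurable_gammaPDF _ _),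
    lintegral_gammaPDF_eq_one has hr, mul_one]

lemma lintegral_id_gammaMeasure (ha : 0 < a) (hr : 0 < r) :
    ∫⁻ x, ENNReal.ofReal x ∂gammaMeasure a r = ENNReal.ofReal (a / r) := by
  have := Real.Gamma_pos_of_pos ha
  have hmoment := lintegral_rpow_gammaMeasure (s := 1) ha (by linarith) hr
  simp only [Real.rpow_one, Real.Gamma_add_one ha.ne'] at hmoment
  rw [hmoment]
  congr 1
  field_simp

lemma lintegral_inv_gammaMeasure (ha : 1 < a) (hr : 0 < r) :
    ∫⁻ x, ENNReal.ofReal x⁻¹ ∂gammaMeasure a r = ENNReal.ofReal (r / (a - 1)) := by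
  have ha' : 0 < a - 1 := sub_pos.2 ha
  have := Real.Gamma_pos_of_pos ha'
  have hmoment := lintegral_rpow_gammaMeasure (s := -1) (by linarith) ha' hr
  have hrec : Real.Gamma a = (a - 1) * Real.Gamma (a - 1) := by
    simpa using Real.Gamma_add_one ha'.ne'
  simp only [Real.rpow_neg_one, ← sub_eq_add_neg, hrec] at hmoment
  rw [hmoment]
  congr 1
  field_simp

end GammaMoments

section RatioTail

lemma prod_measure_lt_div_add_le {μ ν : Measure ℝ} [SFinite μ] [SFinite ν]
    (hμ : ∀ᵐ x ∂μ, 0 < x) (hν : ∀ᵐ y ∂ν, 0 < y) {t : ℝ} (ht : 0 < t) :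
    (μ.prod ν) {p | t < p.1 / (p.1 + p.2)} ≤
      (∫⁻ x, ENNReal.ofReal x ∂μ) * (∫⁻ y, ENNReal.ofReal y⁻¹ ∂ν) / ENNReal.ofReal t := by
  have hfst : ∀ᵐ p ∂μ.prod ν, 0 < p.1 := Measure.quasiMeasurePreserving_fst.ae hμ
  have hsnd : ∀ᵐ p ∂μ.prod ν, 0 < p.2 := Measure.quasiMeasurePreserving_snd.ae hν
  calc (μ.prod ν) {p | t < p.1 / (p.1 + p.2)}
      ≤ (μ.prod ν) {p | ENNReal.ofReal t ≤ ENNReal.ofReal p.1 * ENNReal.ofReal p.2⁻¹} := by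
        apply measure_mono_ae
        filter_upwards [hfst, hsnd] with p hp₁ hp₂ (hp : t < p.1 / (p.1 + p.2))
        change ENNReal.ofReal t ≤ ENNReal.ofReal p.1 * ENNReal.ofReal p.2⁻¹
        rw [← ENNReal.ofReal_mul hp₁.le, ← div_eq_mul_inv]
        refine ENNReal.ofReal_le_ofReal (hp.le.trans ?_)
        gcongr
        exact le_add_of_nonneg_left hp₁.le
    _ ≤ (∫⁻ p, ENNReal.ofReal p.1 * ENNReal.ofReal p.2⁻¹ ∂μ.prod ν) / ENNReal.ofReal t :=
        meas_ge_le_lintegral_div (by fun_prop) (ENNReal.ofReal_pos.2 ht).ne' ENNReal.ofReal_ne_top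
    _ = (∫⁻ x, ENNReal.ofReal x ∂μ) * (∫⁻ y, ENNReal.ofReal y⁻¹ ∂ν) / ENNReal.ofReal t := by
        rw [lintegral_prod_mul (f := fun x ↦ ENNReal.ofReal x)
          (g := fun y ↦ ENNReal.ofReal y⁻¹) (by fun_prop) (by fun_prop)]

lemma gammaMeasure_prod_lt_div_add_le {a b r s t : ℝ} (ha : 0 < a) (hr : 0 < r) (hb : 1 < b)
    (hs : 0 < s) (ht : 0 < t) :
    ((gammaMeasure a r).prod (gammaMeasure b s)) {p | t < p.1 / (p.1 + p.2)} ≤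
      ENNReal.ofReal (a / r * (s / (b - 1)) / t) := by
  have := isProbabilityMeasure_gammaMeasure ha hr
  have := isProbabilityMeasure_gammaMeasure (zero_lt_one.trans hb) hs
  refine (prod_measure_lt_div_add_le (ae_pos_gammaMeasure a r) (ae_pos_gammaMeasure b s)
    ht).trans_eq ?_
  rw [lintegral_id_gammaMeasure ha hr, lintegral_inv_gammaMeasure hb hs,
    ← ENNReal.ofReal_mul (by positivity), ENNReal.ofReal_div_of_pos ht]

end RatioTail

lemma div_sub_one_le_div_sub_one {c k : ℝ} (hc : 1 < c) (hck : c ≤ k) :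
    k / (k - 1) ≤ c / (c - 1) := by
  rw [div_le_div_iff₀ (by linarith) (by linarith)]
  linarith

lemma gammaMeasure_prod_lt_sqrt_mul_le {α c k ε x : ℝ} (hα : 0 < α) (hc : 1 < c) (hck : c ≤ k)
    (hε : 0 < ε) (hx : 0 < x) :
    ((gammaMeasure α 1).prod (gammaMeasure k (k / x)))
        {p | ε < √x * (p.1 / (p.1 + p.2))} ≤
      ENNReal.ofReal (α * (c / (c - 1)) / ε / √x) := by
  have hsqrt : 0 < √x := Real.sqrt_pos.2 hx
  have hk : 1 < k := hc.trans_le hck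
  have hk' : k - 1 ≠ 0 := by linarith
  simp only [← div_lt_iff₀' hsqrt]
  refine (gammaMeasure_prod_lt_div_add_le hα one_pos hk (by positivity) (by positivity)).trans
    (ENNReal.ofReal_le_ofReal ?_)
  calc α / 1 * (k / x / (k - 1)) / (ε / √x)
      = α * (k / (k - 1)) / ε * (√x / x) := by field_simp
    _ = α * (k / (k - 1)) / ε / √x := by rw [Real.sqrt_div_self, ← div_eq_mul_inv]
    _ ≤ α * (c / (c - 1)) / ε / √x := by
        gcongr ?_ / ε / √x
        exact mul_le_mul_of_nonneg_left (div_sub_one_le_div_sub_one hc hck) hα.le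

theorem sqrt_n_mul_gamma_ratio_tendsto_zero_in_probability_general
    {α : ℝ} (hα : 0 < α) {c : ℝ} (hc : 1 < c) {k : ℕ → ℝ} (hk : ∀ᶠ n in atTop, c ≤ k n)
    {ε : ℝ} (hε : 0 < ε) :
    Tendsto
      (fun n : ℕ ↦
        ((gammaMeasure α 1).prod (gammaMeasure (k n) (k n / n)))
          {p : ℝ × ℝ | ε < √n * (p.1 / (p.1 + p.2))})
      atTop (nhds 0) := by
  have hbound : Tendsto (fun n : ℕ ↦ ENNReal.ofReal (α * (c / (c - 1)) / ε / √n))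
      atTop (nhds 0) := by
    rw [← ENNReal.ofReal_zero]
    exact ENNReal.tendsto_ofReal <| tendsto_const_nhds.div_atTop <|
      Real.tendsto_sqrt_atTop.comp tendsto_natCast_atTop_atTop
  refine tendsto_of_tendsto_of_tendsto_of_le_of_le' tendsto_const_nhds hbound
    (.of_forall fun _ ↦ zero_le) ?_
  filter_upwards [hk, eventually_gt_atTop 0] with n hkn hn
  exact gammaMeasure_prod_lt_sqrt_mul_le hα hc hkn hε (Nat.cast_pos.2 hn)

/-- For `α > 0` and a sequence of integers `L n ≥ 2`, let `G_n ∼ Gamma(α, 1)` and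
`H_n ∼ Gamma(L n, L n / n)` be independent, and `V_n = G_n / (G_n + H_n)`.
Then `√n ⬝ V_n → 0` in probability: for every `ε > 0`, the
`Gamma(α, 1) ⊗ Gamma(L n, L n / n)`-measure of
`{(g, h) | √n ⬝ g / (g + h) > ε}` tends to `0` as `n → ∞`. -/
theorem sqrt_n_mul_gamma_ratio_tendsto_zero_in_probability
    (α : ℝ) (hα : 0 < α) (L : ℕ → ℕ) (hL : ∀ n, 2 ≤ L n) (ε : ℝ) (hε : 0 < ε) :
    Tendsto
      (fun n : ℕ =>
        ((gammaMeasure α 1).prod (gammaMeasure (L n) ((L n : ℝ) / n)))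
          {p : ℝ × ℝ | ε < Real.sqrt n * (p.1 / (p.1 + p.2))})
      atTop (nhds 0) := by
  exact sqrt_n_mul_gamma_ratio_tendsto_zero_in_probability_general hα one_lt_two
    (.of_forall fun n ↦ Nat.ofNat_le_cast.2 (hL n)) hε
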